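/- arXiv:2308.08439 — 6 statements merged into one kernel-verified Lean document; each statement's English description precedes it below -/
import Mathlib

section
/- There exist a real-valued function h ∈ L²(0, π), not a.e. zero, vanishing a.e. outside (2a₁ + a₂/2, π), and a real-valued function e₁ ∈ L²((a₁+a₂/2, π−a₁)), not a.e. zero, such that M(e₁)(x) = e₁(x) for a.e. x ∈ (a₁+a₂/2, π−a₁); that is, the operator M has eigenvalue 1 with eigenfunction e₁. -/
open MeasureTheory Real Set Filter

/-- There exist a nonzero `h ∈ L²(0,π)` vanishing a.e. outside `(2a₁+a₂/2, π)` and a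
nonzero `e₁ ∈ L²((a₁+a₂/2, π−a₁))` such that the integral operator `M` built from `h`
satisfies `M(e₁) = e₁` a.e. on `(a₁+a₂/2, π−a₁)`, i.e. `M` has eigenvalue `1` with
eigenfunction `e₁`. -/
theorem M_has_eigenvalue_one (a₁ a₂ : ℝ)
    (ha₁ : π / 3 ≤ a₁) (ha₁' : a₁ < 2 * π / 5)
    (ha₂ : π / 3 ≤ a₂) (ha₂' : a₂ < 2 * π / 3)
    (ha : a₁ < a₂) (hlt : 2 * a₁ + a₂ / 2 < π) :
    ∃ h e₁ : ℝ → ℝ,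
      MemLp h 2 (volume.restrict (Ioo 0 π)) ∧
      ¬ (∀ᵐ x ∂(volume.restrict (Ioo 0 π)), h x = 0) ∧
      (∀ᵐ x ∂(volume : Measure ℝ), x ∉ Ioo (2 * a₁ + a₂ / 2) π → h x = 0) ∧
      MemLp e₁ 2 (volume.restrict (Ioo (a₁ + a₂ / 2) (π - a₁))) ∧
      ¬ (∀ᵐ x ∂(volume.restrict (Ioo (a₁ + a₂ / 2) (π - a₁))), e₁ x = 0) ∧
      (∀ᵐ x ∂(volume.restrict (Ioo (a₁ + a₂ / 2) (π - a₁))),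
        (∫ t in (a₁ + a₂ / 2)..(π - x + a₂ / 2), e₁ t * h (t + x - a₂ / 2)) = e₁ x) := by
  obtain ⟨L, hL⟩ : ∃ L, L = π - 2 * a₁ - a₂ / 2 := ⟨_, rfl⟩
  have hLpos : 0 < L := by linarith
  obtain ⟨k, hk⟩ : ∃ k, k = π / (2 * L) := ⟨_, rfl⟩
  have hkpos : 0 < k := by rw [hk]; have := Real.pi_pos; positivity
  have hkL : k * L = π / 2 := by rw [hk]; field_simp
  have hpi := Real.pi_pos
  refine ⟨(Ioo (2 * a₁ + a₂ / 2) π).indicator (fun _ => k),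
    fun x => Real.cos (k * (x - (a₁ + a₂ / 2))), ?_, ?_, ?_, ?_, ?_, ?_⟩
  · exact (memLp_const k).indicator measurableSet_Ioo
  · intro H
    rw [ae_restrict_iff' measurableSet_Ioo] at H
    have h0 : volume (Ioo (2 * a₁ + a₂ / 2) π) = 0 := by
      refine measure_mono_null ?_ (ae_iff.1 H)
      intro x hx hx'
      have h1 := hx' ⟨by linarith [hx.1], hx.2⟩
      rw [indicator_of_mem hx] at h1
      exact hkpos.ne' h1
    rw [Real.volume_Ioo, ENNReal.ofReal_eq_zero] at h0
    linarith
  · exact Eventually.of_forall fun x hx => indicator_of_notMem hx _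
  · refine MemLp.of_bound (C := 1) ?_ ?_
    · exact (by fun_prop : Continuous fun x : ℝ =>
        Real.cos (k * (x - (a₁ + a₂ / 2)))).aestronglyMeasurable
    · exact Eventually.of_forall fun x => by
        rw [Real.norm_eq_abs]; exact Real.abs_cos_le_one _
  · intro H
    rw [ae_restrict_iff' measurableSet_Ioo] at H
    have h0 : volume (Ioo (a₁ + a₂ / 2) (π - a₁)) = 0 := by
      refine measure_mono_null ?_ (ae_iff.1 H)
      intro x hx hx'
      have h1 := hx' hx
      have h2 : 0 < k * (x - (a₁ + a₂ / 2)) := mul_pos hkpos (by linarith [hx.1])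
      have h3 : k * (x - (a₁ + a₂ / 2)) < k * L :=
        mul_lt_mul_of_pos_left (by linarith [hx.2]) hkpos
      exact (Real.cos_pos_of_mem_Ioo ⟨by linarith, by linarith⟩).ne' h1
    rw [Real.volume_Ioo, ENNReal.ofReal_eq_zero] at h0
    linarith
  · rw [ae_restrict_iff' measurableSet_Ioo]
    refine Eventually.of_forall fun x hx => ?_
    have hle : a₁ + a₂ / 2 ≤ π - x + a₂ / 2 := by linarith [hx.2]
    have e1 : (∫ t in (a₁ + a₂ / 2)..(π - x + a₂ / 2),
        Real.cos (k * (t - (a₁ + a₂ / 2))) *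
          (Ioo (2 * a₁ + a₂ / 2) π).indicator (fun _ => k) (t + x - a₂ / 2)) =
        ∫ t in (a₁ + a₂ / 2)..(π - x + a₂ / 2), Real.cos (k * (t - (a₁ + a₂ / 2))) * k := by
      rw [intervalIntegral.integral_of_le hle, intervalIntegral.integral_of_le hle,
        integral_Ioc_eq_integral_Ioo, integral_Ioc_eq_integral_Ioo]
      refine setIntegral_congr_fun measurableSet_Ioo fun t ht => ?_
      have hm : t + x - a₂ / 2 ∈ Ioo (2 * a₁ + a₂ / 2) π :=
        ⟨by linarith [ht.1, hx.1], by linarith [ht.2]⟩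
      simp only [indicator_of_mem hm]
    have e2 : (∫ t in (a₁ + a₂ / 2)..(π - x + a₂ / 2),
        Real.cos (k * (t - (a₁ + a₂ / 2))) * k) =
        Real.sin (k * ((π - x + a₂ / 2) - (a₁ + a₂ / 2))) -
          Real.sin (k * ((a₁ + a₂ / 2) - (a₁ + a₂ / 2))) := by
      refine intervalIntegral.integral_eq_sub_of_hasDerivAt
        (f := fun t => Real.sin (k * (t - (a₁ + a₂ / 2)))) (fun t _ => ?_) ?_
      · have := (((hasDerivAt_id t).sub_const (a₁ + a₂ / 2)).const_mul k).sin
        simpa using this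
      · exact (by fun_prop : Continuous fun t : ℝ =>
          Real.cos (k * (t - (a₁ + a₂ / 2))) * k).intervalIntegrable _ _
    rw [e1, e2, sub_self, mul_zero, Real.sin_zero, sub_zero]
    beta_reduce
    rw [← Real.sin_pi_div_two_sub, ← hkL, hL]
    congr 1
    ring
end

section
/- For every β ∈ ℂ and a.e. x ∈ (a₁ + a₂/2, π − a₁), the function U(x) := p₂^β(x) − ∫_{x+a₂/2}^{π} p₂^β(t)·q₂^β(t − x + a₂/2) dt vanishes: p₂^β(x) = ∫_{x+a₂/2}^{π} p₂^β(t)·q₂^β(t − x + a₂/2) dt. -/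
open MeasureTheory Real Set Filter

/-- For every `β ∈ ℂ` and a.e. `x ∈ (a₁+a₂/2, π−a₁)`,
`U(x) := p₂^β(x) − ∫_{x+a₂/2}^{π} p₂^β(t)·q₂^β(t − x + a₂/2) dt` vanishes. -/
theorem U_vanishes (a₁ a₂ : ℝ)
    (ha₁ : π / 3 ≤ a₁) (ha₁' : a₁ < 2 * π / 5)
    (ha₂ : π / 3 ≤ a₂) (ha₂' : a₂ < 2 * π / 3)
    (ha : a₁ < a₂) (hlt : 2 * a₁ + a₂ / 2 < π)
    (h e₁ : ℝ → ℝ)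
    (hh : MemLp h 2 (volume.restrict (Ioo 0 π)))
    (hh0 : ∀ᵐ x ∂(volume : Measure ℝ), x ∉ Ioo (2 * a₁ + a₂ / 2) π → h x = 0)
    (he₁ : MemLp e₁ 2 (volume.restrict (Ioo (a₁ + a₂ / 2) (π - a₁))))
    (heig : ∀ᵐ x ∂(volume.restrict (Ioo (a₁ + a₂ / 2) (π - a₁))),
      (∫ t in (a₁ + a₂ / 2)..(π - x + a₂ / 2), e₁ t * h (t + x - a₂ / 2)) = e₁ x)
    (p₂ q₂ : ℂ → ℝ → ℂ)
    (hp₂ : ∀ β x, p₂ β x =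
      if x ∈ Ioo (a₁ + a₂ / 2) (π - a₁) then β * (e₁ x : ℂ)
      else if x ∈ Ioo (2 * a₁ + a₂ / 2) π then (h x : ℂ) else 0)
    (hq₂ : ∀ β x, q₂ β x =
      if x ∈ Ioo (a₁ + a₂ / 2) (π - a₁) then β * (e₁ x : ℂ) else 0) :
    ∀ β : ℂ, ∀ᵐ x ∂(volume.restrict (Ioo (a₁ + a₂ / 2) (π - a₁))),
      p₂ β x = ∫ t in (x + a₂ / 2)..π, p₂ β t * q₂ β (t - x + a₂ / 2) := by
  intro β
  filter_upwards [heig, ae_restrict_mem measurableSet_Ioo] with x hx hxm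
  have hxm' := hxm
  obtain ⟨hx1, hx2⟩ := hxm'
  have hshift : ∀ᵐ s ∂(volume : Measure ℝ),
      s + (x - a₂ / 2) ∉ Ioo (2 * a₁ + a₂ / 2) π → h (s + (x - a₂ / 2)) = 0 :=
    (measurePreserving_add_right volume (x - a₂ / 2)).quasiMeasurePreserving.ae hh0
  have hsub : (∫ t in (x + a₂ / 2)..π, p₂ β t * q₂ β (t - x + a₂ / 2))
      = ∫ s in a₂..(π - x + a₂ / 2), p₂ β (s + (x - a₂ / 2)) * q₂ β s := by
    have key := intervalIntegral.integral_comp_add_right (a := a₂) (b := π - x + a₂ / 2)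
      (fun t => p₂ β t * q₂ β (t - x + a₂ / 2)) (x - a₂ / 2)
    have e1 : a₂ + (x - a₂ / 2) = x + a₂ / 2 := by ring
    have e2 : π - x + a₂ / 2 + (x - a₂ / 2) = π := by ring
    rw [e1, e2] at key
    rw [← key]
    congr 1
    funext s
    have e3 : s + (x - a₂ / 2) - x + a₂ / 2 = s := by ring
    simp only [e3]
  have hle1 : a₂ ≤ π - x + a₂ / 2 := by linarith
  have hle2 : a₁ + a₂ / 2 ≤ π - x + a₂ / 2 := by linarith
  have hcut : (∫ s in Ioc a₂ (π - x + a₂ / 2), p₂ β (s + (x - a₂ / 2)) * q₂ β s)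
      = ∫ s in Ioc (a₁ + a₂ / 2) (π - x + a₂ / 2), p₂ β (s + (x - a₂ / 2)) * q₂ β s := by
    apply setIntegral_eq_of_subset_of_forall_diff_eq_zero measurableSet_Ioc
    · exact Ioc_subset_Ioc_left (by linarith)
    · rintro s ⟨⟨hs1, hs2⟩, hs3⟩
      have : s ∉ Ioo (a₁ + a₂ / 2) (π - a₁) := fun hs => hs3 ⟨hs.1, hs2⟩
      rw [hq₂, if_neg this, mul_zero]
  have hcongr : (∫ s in Ioc (a₁ + a₂ / 2) (π - x + a₂ / 2), p₂ β (s + (x - a₂ / 2)) * q₂ β s)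
      = ∫ s in Ioc (a₁ + a₂ / 2) (π - x + a₂ / 2),
          β * ((e₁ s * h (s + x - a₂ / 2) : ℝ) : ℂ) := by
    apply setIntegral_congr_ae measurableSet_Ioc
    filter_upwards [hshift] with s hs hsm
    obtain ⟨hs1, hs2⟩ := hsm
    have hq : s ∈ Ioo (a₁ + a₂ / 2) (π - a₁) := ⟨hs1, by linarith⟩
    have hp : s + (x - a₂ / 2) ∉ Ioo (a₁ + a₂ / 2) (π - a₁) := by
      intro hc
      have := hc.2
      linarith
    have e4 : s + x - a₂ / 2 = s + (x - a₂ / 2) := by ring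
    rw [hq₂, if_pos hq, hp₂, if_neg hp, e4]
    split_ifs with hc
    · push_cast; ring
    · rw [hs hc]; simp
  rw [hsub, intervalIntegral.integral_of_le hle1, hcut, hcongr, integral_const_mul,
    integral_complex_ofReal, ← intervalIntegral.integral_of_le hle2, hx, hp₂, if_pos hxm]
end

section
/- For every β ∈ ℂ and a.e. x ∈ (a₁ + a₂/2, π − a₁), the function V(x) := q₂^β(x) − ∫_{x+a₁−a₂/2}^{π} p₂^β(t)·p₂^β(t − x + a₂/2) dt vanishes: q₂^β(x) = ∫_{x+a₁−a₂/2}^{π} p₂^β(t)·p₂^β(t − x + a₂/2) dt. -/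
open MeasureTheory Real Set Filter

/-- For every `β ∈ ℂ` and a.e. `x ∈ (a₁+a₂/2, π−a₁)`,
`V(x) := q₂^β(x) − ∫_{x+a₁−a₂/2}^{π} p₂^β(t)·p₂^β(t − x + a₂/2) dt` vanishes. -/
theorem V_vanishes (a₁ a₂ : ℝ)
    (ha₁ : π / 3 ≤ a₁) (ha₁' : a₁ < 2 * π / 5)
    (ha₂ : π / 3 ≤ a₂) (ha₂' : a₂ < 2 * π / 3)
    (ha : a₁ < a₂) (hlt : 2 * a₁ + a₂ / 2 < π)
    (h e₁ : ℝ → ℝ)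
    (hh : MemLp h 2 (volume.restrict (Ioo 0 π)))
    (hh0 : ∀ᵐ x ∂(volume : Measure ℝ), x ∉ Ioo (2 * a₁ + a₂ / 2) π → h x = 0)
    (he₁ : MemLp e₁ 2 (volume.restrict (Ioo (a₁ + a₂ / 2) (π - a₁))))
    (heig : ∀ᵐ x ∂(volume.restrict (Ioo (a₁ + a₂ / 2) (π - a₁))),
      (∫ t in (a₁ + a₂ / 2)..(π - x + a₂ / 2), e₁ t * h (t + x - a₂ / 2)) = e₁ x)
    (p₂ q₂ : ℂ → ℝ → ℂ)
    (hp₂ : ∀ β x, p₂ β x =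
      if x ∈ Ioo (a₁ + a₂ / 2) (π - a₁) then β * (e₁ x : ℂ)
      else if x ∈ Ioo (2 * a₁ + a₂ / 2) π then (h x : ℂ) else 0)
    (hq₂ : ∀ β x, q₂ β x =
      if x ∈ Ioo (a₁ + a₂ / 2) (π - a₁) then β * (e₁ x : ℂ) else 0) :
    ∀ β : ℂ, ∀ᵐ x ∂(volume.restrict (Ioo (a₁ + a₂ / 2) (π - a₁))),
      q₂ β x = ∫ t in (x + a₁ - a₂ / 2)..π, p₂ β t * p₂ β (t - x + a₂ / 2) := by
  intro β
  filter_upwards [heig, ae_restrict_mem measurableSet_Ioo] with x hx hxm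
  rw [hq₂, if_pos hxm, ← hx]
  obtain ⟨hx1, hx2⟩ := hxm
  have hcv : (∫ t in (x + a₁ - a₂ / 2)..π, p₂ β t * p₂ β (t - x + a₂ / 2))
      = ∫ s in a₁..(π - x + a₂ / 2), p₂ β (s + (x - a₂ / 2)) * p₂ β s := by
    have := intervalIntegral.integral_comp_add_right (a := a₁) (b := π - x + a₂ / 2)
      (fun t => p₂ β t * p₂ β (t - x + a₂ / 2)) (x - a₂ / 2)
    have e1 : a₁ + (x - a₂ / 2) = x + a₁ - a₂ / 2 := by ring
    have e2 : π - x + a₂ / 2 + (x - a₂ / 2) = π := by ring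
    rw [e1, e2] at this
    rw [← this]
    congr 1
    ext s
    congr 2
    ring
  have hpi := Real.pi_pos
  rw [hcv, intervalIntegral.integral_of_le (by linarith),
    intervalIntegral.integral_of_le (by linarith),
    integral_Ioc_eq_integral_Ioo, integral_Ioc_eq_integral_Ioo,
    ← integral_complex_ofReal, ← integral_const_mul]
  have hsub : Ioo (a₁ + a₂ / 2) (π - x + a₂ / 2) ⊆ Ioo a₁ (π - x + a₂ / 2) :=
    Ioo_subset_Ioo_left (by linarith)
  rw [setIntegral_eq_of_subset_of_forall_diff_eq_zero measurableSet_Ioo hsub]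
  · apply setIntegral_congr_fun measurableSet_Ioo
    rintro s ⟨hs1, hs2⟩
    have e : s + (x - a₂ / 2) = s + x - a₂ / 2 := by ring
    have h1 : p₂ β s = β * (e₁ s : ℂ) := by
      rw [hp₂, if_pos ⟨hs1, by linarith⟩]
    have h2 : p₂ β (s + (x - a₂ / 2)) = (h (s + x - a₂ / 2) : ℂ) := by
      rw [hp₂, e, if_neg (fun hc => by linarith [hc.2]),
        if_pos ⟨by linarith, by linarith⟩]
    simp only [h1, h2]
    push_cast
    ring
  · rintro s ⟨⟨hs1, hs2⟩, hs3⟩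
    have hs4 : s ≤ a₁ + a₂ / 2 := by
      by_contra hc
      exact hs3 ⟨not_le.mp hc, hs2⟩
    have h1 : p₂ β s = 0 := by
      rw [hp₂, if_neg (fun hc => by linarith [hc.1]), if_neg (fun hc => by linarith [hc.1])]
    rw [h1, mul_zero]
end

section
/- For the family of boundary-value-problem data given by p₁ = q₁ = 0, p₂ = p₂^β, q₂ = q₂^β, the characteristic functions are independent of β: for every β ∈ ℂ, every m ∈ {0,1} and every λ ∈ ℂ, Δ₁^m(λ) = sin(πλ) − (−1)^m ∫_{2a₁+a₂/2}^{π} h(x)·sin(λ(π − 2x + a₁)) dx and Δ₂^m(λ) = −cos(πλ) + (−1)^m ∫_{2a₁+a₂/2}^{π} h(x)·cos(λ(π − 2x + a₁)) dx. In particular, the zero sets of Δ₁^m and Δ₂^m (the spectra of the boundary value problems D_j(P_β, Q_β, m)) do not depend on β. -/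
open MeasureTheory Real Set Filter

noncomputable def alpha1 (a₁ : ℝ) (f g : ℝ → ℂ) (x : ℝ) : ℂ :=
  ∫ t in (x + a₁)..π, f t * g (t - x)

noncomputable def alpha2 (a₂ : ℝ) (f g : ℝ → ℂ) (x : ℝ) : ℂ :=
  ∫ t in (x + a₂)..π, f t * g (t - x)

noncomputable def alpha12 (a₁ a₂ : ℝ) (f g : ℝ → ℂ) (x : ℝ) : ℂ :=
  ∫ t in (x + (a₁ + a₂) / 2)..π, f t * g (t - x + (a₂ - a₁) / 2)

noncomputable def alpha21 (a₁ a₂ : ℝ) (f g : ℝ → ℂ) (x : ℝ) : ℂ :=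
  ∫ t in (x + (a₁ + a₂) / 2)..π, f t * g (t - x - (a₂ - a₁) / 2)

noncomputable def Kfun (a₁ a₂ : ℝ) (m : ℕ) (p₁ p₂ q₁ q₂ : ℝ → ℂ) (x : ℝ) : ℂ :=
  (-1 : ℂ) ^ m * p₁ (x + a₁ / 2) + q₁ (x + a₂ / 2)
    - (alpha1 a₁ p₁ p₂ x - alpha1 a₁ p₂ p₁ x) * (Ioo a₁ (π - a₁)).indicator 1 x
    - (alpha2 a₂ q₁ q₂ x - alpha2 a₂ q₂ q₁ x) * (Ioo a₂ (π - a₂)).indicator 1 x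
    + (-1 : ℂ) ^ m *
        (alpha12 a₁ a₂ p₂ q₁ x - alpha12 a₁ a₂ p₁ q₂ x
          + alpha21 a₁ a₂ q₂ p₁ x - alpha21 a₁ a₂ q₁ p₂ x) *
        (Ioo ((a₁ + a₂) / 2) (π - (a₁ + a₂) / 2)).indicator 1 x

noncomputable def Gfun (a₁ a₂ : ℝ) (m : ℕ) (p₁ p₂ q₁ q₂ : ℝ → ℂ) (x : ℝ) : ℂ :=
  (-1 : ℂ) ^ m * p₂ (x + a₁ / 2) + q₂ (x + a₂ / 2)
    - (alpha1 a₁ p₁ p₁ x + alpha1 a₁ p₂ p₂ x) * (Ioo a₁ (π - a₁)).indicator 1 x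
    - (alpha2 a₂ q₁ q₁ x + alpha2 a₂ q₂ q₂ x) * (Ioo a₂ (π - a₂)).indicator 1 x
    - (-1 : ℂ) ^ m *
        (alpha12 a₁ a₂ p₁ q₁ x + alpha12 a₁ a₂ p₂ q₂ x
          + alpha21 a₁ a₂ q₁ p₁ x + alpha21 a₁ a₂ q₂ p₂ x) *
        (Ioo ((a₁ + a₂) / 2) (π - (a₁ + a₂) / 2)).indicator 1 x

noncomputable def Delta1 (a₁ a₂ : ℝ) (m : ℕ) (p₁ p₂ q₁ q₂ : ℝ → ℂ) (lam : ℂ) : ℂ :=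
  Complex.sin (π * lam)
    + (∫ x in (a₁ / 2)..(π - a₁ / 2),
        Kfun a₁ a₂ m p₁ p₂ q₁ q₂ x * Complex.cos (lam * ((π - 2 * x : ℝ) : ℂ)))
    - ∫ x in (a₁ / 2)..(π - a₁ / 2),
        Gfun a₁ a₂ m p₁ p₂ q₁ q₂ x * Complex.sin (lam * ((π - 2 * x : ℝ) : ℂ))

noncomputable def Delta2 (a₁ a₂ : ℝ) (m : ℕ) (p₁ p₂ q₁ q₂ : ℝ → ℂ) (lam : ℂ) : ℂ :=
  -Complex.cos (π * lam)
    + (∫ x in (a₁ / 2)..(π - a₁ / 2),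
        Kfun a₁ a₂ m p₁ p₂ q₁ q₂ x * Complex.sin (lam * ((π - 2 * x : ℝ) : ℂ)))
    + ∫ x in (a₁ / 2)..(π - a₁ / 2),
        Gfun a₁ a₂ m p₁ p₂ q₁ q₂ x * Complex.cos (lam * ((π - 2 * x : ℝ) : ℂ))

lemma key_zero (F : ℝ → ℂ) (lo hi : ℝ) (hle : lo ≤ hi) (h0 : ∀ t ∈ Ioo lo hi, F t = 0) :
    ∫ t in lo..hi, F t = 0 := by
  rw [intervalIntegral.integral_of_le hle, integral_Ioc_eq_integral_Ioo]
  exact setIntegral_eq_zero_of_forall_eq_zero h0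

lemma key_cut (F G : ℝ → ℂ) (lo c hi : ℝ) (h1 : lo ≤ c) (h2 : c ≤ hi)
    (h0 : ∀ t ∈ Ioc lo c, F t = 0) (hG : ∀ t ∈ Ioo c hi, F t = G t) :
    ∫ t in lo..hi, F t = ∫ t in c..hi, G t := by
  rw [intervalIntegral.integral_of_le (h1.trans h2), intervalIntegral.integral_of_le h2,
    integral_Ioc_eq_integral_Ioo, integral_Ioc_eq_integral_Ioo]
  rw [← setIntegral_congr_fun measurableSet_Ioo hG]
  refine (setIntegral_eq_of_subset_of_forall_sdiff_eq_zero measurableSet_Ioo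
    (Ioo_subset_Ioo_left h1) ?_)
  rintro t ⟨ht, ht'⟩
  apply h0
  refine ⟨ht.1, ?_⟩
  by_contra hc
  exact ht' ⟨not_le.mp hc, ht.2⟩

lemma key_M (a₁ a₂ y : ℝ) (h e₁ : ℝ → ℝ) (β : ℂ)
    (hy : (∫ t in (a₁ + a₂ / 2)..(π - y + a₂ / 2), e₁ t * h (t + y - a₂ / 2)) = e₁ y) :
    ∫ t in (y + a₁)..π, (h t : ℂ) * (β * (e₁ (t - (y - a₂ / 2)) : ℂ)) = β * (e₁ y : ℂ) := by
  have := intervalIntegral.integral_comp_add_right (a := a₁ + a₂ / 2) (b := π - y + a₂ / 2)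
    (fun t => e₁ (t - (y - a₂ / 2)) * h t) (y - a₂ / 2)
  rw [show a₁ + a₂ / 2 + (y - a₂ / 2) = y + a₁ by ring,
    show π - y + a₂ / 2 + (y - a₂ / 2) = π by ring] at this
  rw [← hy]
  have e : (fun t => e₁ t * h (t + y - a₂ / 2)) =
      fun t => e₁ (t + (y - a₂ / 2) - (y - a₂ / 2)) * h (t + (y - a₂ / 2)) := by
    funext t
    rw [add_sub_cancel_right, add_sub_assoc]
  rw [e, this, ← intervalIntegral.integral_ofReal, ← intervalIntegral.integral_const_mul]
  congr 1
  funext t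
  push_cast
  ring

lemma key_conv (a₁ a₂ y lo : ℝ) (ha₁ : π / 3 ≤ a₁) (ha₂ : π / 3 ≤ a₂)
    (h e₁ : ℝ → ℝ) (β : ℂ) (p r : ℝ → ℂ)
    (hp : ∀ x, p x =
      if x ∈ Ioo (a₁ + a₂ / 2) (π - a₁) then β * (e₁ x : ℂ)
      else if x ∈ Ioo (2 * a₁ + a₂ / 2) π then (h x : ℂ) else 0)
    (hr : ∀ x < π - a₁, r x = if x ∈ Ioo (a₁ + a₂ / 2) (π - a₁) then β * (e₁ x : ℂ) else 0)
    (hy0 : a₁ + a₂ / 2 < y) (hlo : lo ≤ y + a₁) (hlo' : lo ≤ π)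
    (hy : y < π - a₁ →
      (∫ t in (a₁ + a₂ / 2)..(π - y + a₂ / 2), e₁ t * h (t + y - a₂ / 2)) = e₁ y) :
    ∫ t in lo..π, p t * r (t - (y - a₂ / 2)) =
      if y ∈ Ioo (a₁ + a₂ / 2) (π - a₁) then β * (e₁ y : ℂ) else 0 := by
  have hpi := Real.pi_pos
  have z : ∀ t < π, t ≤ y + a₁ → p t * r (t - (y - a₂ / 2)) = 0 := by
    intro t ht1 ht2
    rw [hr _ (by linarith), if_neg, mul_zero]
    rintro ⟨h1, -⟩
    linarith
  by_cases hyI : y < π - a₁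
  · rw [if_pos ⟨hy0, hyI⟩, ← key_M a₁ a₂ y h e₁ β (hy hyI)]
    apply key_cut _ _ _ _ _ hlo (by linarith)
    · intro t ht
      exact z t (by linarith [ht.2]) ht.2
    · intro t ht
      obtain ⟨t1, t2⟩ := ht
      rw [hr _ (by linarith), if_pos ⟨by linarith, by linarith⟩, hp, if_neg, if_pos]
      · exact ⟨by linarith, t2⟩
      · rintro ⟨-, h2⟩
        linarith
  · rw [if_neg (fun hc => hyI hc.2)]
    apply key_zero _ _ _ hlo'
    intro t ht
    exact z t ht.2 (by linarith [ht.2])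

lemma key_G (a₁ a₂ : ℝ)
    (ha₁ : π / 3 ≤ a₁) (ha₂ : π / 3 ≤ a₂) (ha₂' : a₂ < 2 * π / 3)
    (h e₁ : ℝ → ℝ) (β : ℂ) (p q : ℝ → ℂ)
    (hp : ∀ x, p x =
      if x ∈ Ioo (a₁ + a₂ / 2) (π - a₁) then β * (e₁ x : ℂ)
      else if x ∈ Ioo (2 * a₁ + a₂ / 2) π then (h x : ℂ) else 0)
    (hq : ∀ x, q x =
      if x ∈ Ioo (a₁ + a₂ / 2) (π - a₁) then β * (e₁ x : ℂ) else 0)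
    (m : ℕ) (x : ℝ)
    (H : ∀ y, y = x + a₂ / 2 ∨ y = x + a₁ / 2 → y ∈ Ioo (a₁ + a₂ / 2) (π - a₁) →
      (∫ t in (a₁ + a₂ / 2)..(π - y + a₂ / 2), e₁ t * h (t + y - a₂ / 2)) = e₁ y) :
    Gfun a₁ a₂ m 0 p 0 q x =
      (-1 : ℂ) ^ m * (Ioo (2 * a₁ + a₂ / 2) π).indicator (fun y => (h y : ℂ)) (x + a₁ / 2) := by
  have hpi := Real.pi_pos
  have A1 : alpha1 a₁ p p x * (Ioo a₁ (π - a₁)).indicator 1 x = q (x + a₂ / 2) := by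
    rw [hq]
    by_cases hx : x ∈ Ioo a₁ (π - a₁)
    · obtain ⟨x1, x2⟩ := id hx
      rw [indicator_of_mem hx, Pi.one_apply, mul_one, alpha1]
      have := key_conv a₁ a₂ (x + a₂ / 2) (x + a₁) ha₁ ha₂ h e₁ β p p hp (by
        intro s hs
        rw [hp]
        congr 1
        rw [if_neg]
        rintro ⟨h1, -⟩
        linarith) (by linarith) (by linarith) (by linarith)
        (fun hy => H _ (Or.inl rfl) ⟨by linarith, hy⟩)
      rw [add_sub_cancel_right] at this
      exact this
    · rw [indicator_of_notMem hx, mul_zero, if_neg]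
      rintro ⟨h1, h2⟩
      exact hx ⟨by linarith, by linarith⟩
  have A2 : alpha2 a₂ q q x * (Ioo a₂ (π - a₂)).indicator 1 x = 0 := by
    by_cases hx : x ∈ Ioo a₂ (π - a₂)
    · obtain ⟨x1, x2⟩ := id hx
      rw [alpha2, key_zero, zero_mul]
      · linarith
      · intro t ht
        rw [hq, hq (t - x)]
        by_cases h1 : t ∈ Ioo (a₁ + a₂ / 2) (π - a₁)
        · rw [if_neg (c := t - x ∈ _), mul_zero]
          rintro ⟨h3, -⟩
          linarith [h1.2]
        · rw [if_neg h1, zero_mul]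
    · rw [indicator_of_notMem hx, mul_zero]
  have A3 : alpha21 a₁ a₂ q p x *
      (Ioo ((a₁ + a₂) / 2) (π - (a₁ + a₂) / 2)).indicator 1 x = 0 := by
    by_cases hx : x ∈ Ioo ((a₁ + a₂) / 2) (π - (a₁ + a₂) / 2)
    · obtain ⟨x1, x2⟩ := id hx
      rw [alpha21, key_zero, zero_mul]
      · linarith
      · intro t ht
        rw [hq, hp]
        by_cases h1 : t ∈ Ioo (a₁ + a₂ / 2) (π - a₁)
        · rw [if_neg (c := t - x - _ ∈ _), if_neg (c := t - x - _ ∈ _), mul_zero]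
          · rintro ⟨h3, -⟩
            linarith [h1.2]
          · rintro ⟨h3, -⟩
            linarith [h1.2]
        · rw [if_neg h1, zero_mul]
    · rw [indicator_of_notMem hx, mul_zero]
  have A4 : alpha12 a₁ a₂ p q x *
      (Ioo ((a₁ + a₂) / 2) (π - (a₁ + a₂) / 2)).indicator 1 x = q (x + a₁ / 2) := by
    rw [hq]
    by_cases hx : x ∈ Ioo ((a₁ + a₂) / 2) (π - (a₁ + a₂) / 2)
    · obtain ⟨x1, x2⟩ := id hx
      rw [indicator_of_mem hx, Pi.one_apply, mul_one, alpha12]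
      have := key_conv a₁ a₂ (x + a₁ / 2) (x + (a₁ + a₂) / 2) ha₁ ha₂ h e₁ β p q hp
        (fun s _ => hq s) (by linarith) (by linarith) (by linarith)
        (fun hy => H _ (Or.inr rfl) ⟨by linarith, hy⟩)
      rw [← this]
      congr 1
      funext t
      congr 2
      ring
    · rw [indicator_of_notMem hx, mul_zero, if_neg]
      rintro ⟨h1, h2⟩
      exact hx ⟨by linarith, by linarith⟩
  have B : p (x + a₁ / 2) = q (x + a₁ / 2) +
      (Ioo (2 * a₁ + a₂ / 2) π).indicator (fun y => (h y : ℂ)) (x + a₁ / 2) := by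
    rw [hp, hq]
    by_cases h1 : x + a₁ / 2 ∈ Ioo (a₁ + a₂ / 2) (π - a₁)
    · rw [if_pos h1, if_pos h1, indicator_of_notMem, add_zero]
      rintro ⟨h3, -⟩
      linarith [h1.2]
    · rw [if_neg h1, if_neg h1, zero_add, indicator_apply]
  have Z1 : alpha1 a₁ 0 0 x = 0 := by simp [alpha1]
  have Z2 : alpha2 a₂ 0 0 x = 0 := by simp [alpha2]
  have Z3 : alpha12 a₁ a₂ 0 0 x = 0 := by simp [alpha12]
  have Z4 : alpha21 a₁ a₂ 0 0 x = 0 := by simp [alpha21]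
  rw [Gfun, Z1, Z2, Z3, Z4]
  linear_combination (-1 : ℂ) ^ m * B - A1 - A2 - (-1 : ℂ) ^ m * A3 - (-1 : ℂ) ^ m * A4

lemma key_K (a₁ a₂ : ℝ) (m : ℕ) (p q : ℝ → ℂ) (x : ℝ) : Kfun a₁ a₂ m 0 p 0 q x = 0 := by
  simp [Kfun, alpha1, alpha2, alpha12, alpha21]

lemma key_int (a₁ a₂ : ℝ)
    (ha₁ : π / 3 ≤ a₁) (ha₂ : π / 3 ≤ a₂) (ha₂' : a₂ < 2 * π / 3)
    (hlt : 2 * a₁ + a₂ / 2 < π)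
    (h e₁ : ℝ → ℝ) (β : ℂ) (p q : ℝ → ℂ)
    (heig : ∀ᵐ x ∂(volume.restrict (Ioo (a₁ + a₂ / 2) (π - a₁))),
      (∫ t in (a₁ + a₂ / 2)..(π - x + a₂ / 2), e₁ t * h (t + x - a₂ / 2)) = e₁ x)
    (hp : ∀ x, p x =
      if x ∈ Ioo (a₁ + a₂ / 2) (π - a₁) then β * (e₁ x : ℂ)
      else if x ∈ Ioo (2 * a₁ + a₂ / 2) π then (h x : ℂ) else 0)
    (hq : ∀ x, q x =
      if x ∈ Ioo (a₁ + a₂ / 2) (π - a₁) then β * (e₁ x : ℂ) else 0)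
    (m : ℕ) (f : ℝ → ℂ) :
    ∫ x in (a₁ / 2)..(π - a₁ / 2), Gfun a₁ a₂ m 0 p 0 q x * f (π - 2 * x) =
      (-1 : ℂ) ^ m * ∫ x in (2 * a₁ + a₂ / 2)..π, (h x : ℂ) * f (π - 2 * x + a₁) := by
  have hpi := Real.pi_pos
  rw [ae_restrict_iff' measurableSet_Ioo] at heig
  have s1 := (measurePreserving_add_right (volume : Measure ℝ)
    (a₁ / 2)).quasiMeasurePreserving.ae heig
  have s2 := (measurePreserving_add_right (volume : Measure ℝ)
    (a₂ / 2)).quasiMeasurePreserving.ae heig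
  set F : ℝ → ℂ := fun y =>
    (Ioo (2 * a₁ + a₂ / 2) π).indicator (fun y => (h y : ℂ)) y * f (π - 2 * y + a₁) with hF
  have e1 : ∫ x in (a₁ / 2)..(π - a₁ / 2), Gfun a₁ a₂ m 0 p 0 q x * f (π - 2 * x) =
      ∫ x in (a₁ / 2)..(π - a₁ / 2), (-1 : ℂ) ^ m * F (x + a₁ / 2) := by
    apply intervalIntegral.integral_congr_ae
    filter_upwards [s1, s2] with x h1 h2 _
    rw [key_G a₁ a₂ ha₁ ha₂ ha₂' h e₁ β p q hp hq m x, hF]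
    · simp only []
      rw [show π - 2 * (x + a₁ / 2) + a₁ = π - 2 * x by ring, mul_assoc]
    · rintro y (rfl | rfl) hy
      · exact h2 hy
      · exact h1 hy
  rw [e1, intervalIntegral.integral_const_mul, intervalIntegral.integral_comp_add_right]
  congr 1
  rw [show π - a₁ / 2 + a₁ / 2 = π by ring]
  apply key_cut _ _ _ _ _ (by linarith) hlt.le
  · intro t ht
    simp only [hF]
    rw [indicator_of_notMem, zero_mul]
    rintro ⟨h1, -⟩
    linarith [ht.2]
  · intro t ht
    simp only [hF]
    rw [indicator_of_mem ht]

/-- For the family `p₁ = q₁ = 0`, `p₂ = p₂^β`, `q₂ = q₂^β`, the characteristic functions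
`Δ₁^m` and `Δ₂^m` have the stated explicit form involving only `h`, hence are independent
of `β`; in particular their zero sets (the spectra of `D_j(P_β,Q_β,m)`) do not depend
on `β`. -/
theorem characteristic_functions_independent_of_beta (a₁ a₂ : ℝ)
    (ha₁ : π / 3 ≤ a₁) (ha₁' : a₁ < 2 * π / 5)
    (ha₂ : π / 3 ≤ a₂) (ha₂' : a₂ < 2 * π / 3)
    (ha : a₁ < a₂) (hlt : 2 * a₁ + a₂ / 2 < π)
    (h e₁ : ℝ → ℝ)
    (hh : MemLp h 2 (volume.restrict (Ioo 0 π)))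
    (hhne : ¬ (∀ᵐ x ∂(volume.restrict (Ioo 0 π)), h x = 0))
    (hh0 : ∀ᵐ x ∂(volume : Measure ℝ), x ∉ Ioo (2 * a₁ + a₂ / 2) π → h x = 0)
    (he₁ : MemLp e₁ 2 (volume.restrict (Ioo (a₁ + a₂ / 2) (π - a₁))))
    (heig : ∀ᵐ x ∂(volume.restrict (Ioo (a₁ + a₂ / 2) (π - a₁))),
      (∫ t in (a₁ + a₂ / 2)..(π - x + a₂ / 2), e₁ t * h (t + x - a₂ / 2)) = e₁ x)
    (p₂ q₂ : ℂ → ℝ → ℂ)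
    (hp₂ : ∀ β x, p₂ β x =
      if x ∈ Ioo (a₁ + a₂ / 2) (π - a₁) then β * (e₁ x : ℂ)
      else if x ∈ Ioo (2 * a₁ + a₂ / 2) π then (h x : ℂ) else 0)
    (hq₂ : ∀ β x, q₂ β x =
      if x ∈ Ioo (a₁ + a₂ / 2) (π - a₁) then β * (e₁ x : ℂ) else 0) :
    (∀ (β : ℂ) (m : ℕ), m = 0 ∨ m = 1 → ∀ lam : ℂ,
      Delta1 a₁ a₂ m 0 (p₂ β) 0 (q₂ β) lam
          = Complex.sin (π * lam)
            - (-1 : ℂ) ^ m * ∫ x in (2 * a₁ + a₂ / 2)..π,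
                (h x : ℂ) * Complex.sin (lam * ((π - 2 * x + a₁ : ℝ) : ℂ)) ∧
      Delta2 a₁ a₂ m 0 (p₂ β) 0 (q₂ β) lam
          = -Complex.cos (π * lam)
            + (-1 : ℂ) ^ m * ∫ x in (2 * a₁ + a₂ / 2)..π,
                (h x : ℂ) * Complex.cos (lam * ((π - 2 * x + a₁ : ℝ) : ℂ))) ∧
    (∀ (β β' : ℂ) (m : ℕ), m = 0 ∨ m = 1 → ∀ lam : ℂ,
      (Delta1 a₁ a₂ m 0 (p₂ β) 0 (q₂ β) lam = 0 ↔
        Delta1 a₁ a₂ m 0 (p₂ β') 0 (q₂ β') lam = 0) ∧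
      (Delta2 a₁ a₂ m 0 (p₂ β) 0 (q₂ β) lam = 0 ↔
        Delta2 a₁ a₂ m 0 (p₂ β') 0 (q₂ β') lam = 0)) := by
  have main : ∀ (β : ℂ) (m : ℕ), m = 0 ∨ m = 1 → ∀ lam : ℂ,
      Delta1 a₁ a₂ m 0 (p₂ β) 0 (q₂ β) lam
          = Complex.sin (π * lam)
            - (-1 : ℂ) ^ m * ∫ x in (2 * a₁ + a₂ / 2)..π,
                (h x : ℂ) * Complex.sin (lam * ((π - 2 * x + a₁ : ℝ) : ℂ)) ∧
      Delta2 a₁ a₂ m 0 (p₂ β) 0 (q₂ β) lam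
          = -Complex.cos (π * lam)
            + (-1 : ℂ) ^ m * ∫ x in (2 * a₁ + a₂ / 2)..π,
                (h x : ℂ) * Complex.cos (lam * ((π - 2 * x + a₁ : ℝ) : ℂ)) := by
    intro β m _ lam
    have k := key_int a₁ a₂ ha₁ ha₂ ha₂' hlt h e₁ β (p₂ β) (q₂ β) heig (hp₂ β) (hq₂ β) m
    constructor
    · rw [Delta1, k (fun u => Complex.sin (lam * (u : ℂ)))]
      simp only [key_K, zero_mul, intervalIntegral.integral_zero, add_zero]
    · rw [Delta2, k (fun u => Complex.cos (lam * (u : ℂ)))]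
      simp only [key_K, zero_mul, intervalIntegral.integral_zero, add_zero]
  refine ⟨main, ?_⟩
  intro β β' m hm lam
  rw [(main β m hm lam).1, (main β m hm lam).2, (main β' m hm lam).1, (main β' m hm lam).2]
  exact ⟨Iff.rfl, Iff.rfl⟩
end

section
/- (Uniqueness theorem.) Let π/3 ≤ a₁ < 2π/5 < a₂ < π and 2a₁ + a₂/2 ≥ π. Let p₁, p₂, q₁, q₂ and p̃₁, p̃₂, q̃₁, q̃₂ be functions in L²(0, π; ℂ) with p_k = p̃_k = 0 a.e. on (0, a₁) and q_k = q̃_k = 0 a.e. on (0, a₂) for k = 1, 2. Let K^m, G^m be built from (p₁, p₂, q₁, q₂) and K̃^m, G̃^m be built (by the same formulas) from (p̃₁, p̃₂, q̃₁, q̃₂). If K^m = K̃^m a.e. on (a₁/2, π−a₁/2) and G^m = G̃^m a.e. on (a₁/2, π−a₁/2) for both m = 0 and m = 1, then p_k = p̃_k a.e. on (a₁, π) and q_k = q̃_k a.e. on (a₂, π) for k = 1, 2. (Equivalently, the four spectra of the boundary value problems D_j(P,Q,m), which determine the functions K^m and G^m, uniquely determine the matrix potentials P on (a₁, π) and Q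 on (a₂, π).) -/
open MeasureTheory Real Set Filter

/-- The two functions agree almost everywhere on the open interval. -/
def AgreeOn (f f' : ℝ → ℂ) (A B : ℝ) : Prop :=
  ∀ᵐ y ∂(volume : Measure ℝ), y ∈ Ioo A B → f y = f' y

theorem ae_shift {P : ℝ → Prop} (h : ∀ᵐ y ∂(volume : Measure ℝ), P y) (c : ℝ) :
    ∀ᵐ x ∂(volume : Measure ℝ), P (x + c) :=
  (quasiMeasurePreserving_add_right (volume : Measure ℝ) c).ae h

theorem AgreeOn.integral {f f' g g' : ℝ → ℂ} {A B C : ℝ} (hf : AgreeOn f f' A π)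
    (hg : AgreeOn g g' B C) {lo s : ℝ} {u : ℝ → ℝ} (hu : ∀ t, u t = t + s)
    (h1 : A ≤ lo) (h2 : lo ≤ π) (h3 : B ≤ lo + s) (h4 : π + s ≤ C) :
    ∫ t in lo..π, f t * g (u t) = ∫ t in lo..π, f' t * g' (u t) := by
  apply intervalIntegral.integral_congr_ae
  have hne : ∀ᵐ t ∂(volume : Measure ℝ), t ≠ π := by
    simp [ae_iff]
  filter_upwards [hf, ae_shift hg s, hne] with t ht1 ht2 ht3 hmem
  rw [uIoc_of_le h2] at hmem
  have hlt : t < π := lt_of_le_of_ne hmem.2 ht3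
  rw [hu t, ht1 ⟨by linarith [hmem.1], hlt⟩, ht2 ⟨by linarith [hmem.1], by linarith⟩]

theorem agree_alpha {a x : ℝ} {f f' g g' : ℝ → ℂ} {A C : ℝ} (hf : AgreeOn f f' A π)
    (hg : AgreeOn g g' a C) (h1 : A ≤ x + a) (h2 : x + a ≤ π) (h4 : π - x ≤ C) :
    alpha1 a f g x = alpha1 a f' g' x :=
  hf.integral hg (s := -x) (fun t => by ring) h1 h2 (by linarith) (by linarith)

theorem agree_alpha' {a x : ℝ} {f f' g g' : ℝ → ℂ} {A C : ℝ} (hf : AgreeOn f f' A π)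
    (hg : AgreeOn g g' a C) (h1 : A ≤ x + a) (h2 : x + a ≤ π) (h4 : π - x ≤ C) :
    alpha2 a f g x = alpha2 a f' g' x :=
  agree_alpha hf hg h1 h2 h4

theorem agree_alpha12 {a b x : ℝ} {f f' g g' : ℝ → ℂ} {A C : ℝ} (hf : AgreeOn f f' A π)
    (hg : AgreeOn g g' b C) (h1 : A ≤ x + (a + b) / 2) (h2 : x + (a + b) / 2 ≤ π)
    (h4 : π - x + (b - a) / 2 ≤ C) :
    alpha12 a b f g x = alpha12 a b f' g' x :=
  hf.integral hg (s := -x + (b - a) / 2) (fun t => by ring) h1 h2 (by linarith) (by linarith)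

theorem agree_alpha21 {a b x : ℝ} {f f' g g' : ℝ → ℂ} {A C : ℝ} (hf : AgreeOn f f' A π)
    (hg : AgreeOn g g' a C) (h1 : A ≤ x + (a + b) / 2) (h2 : x + (a + b) / 2 ≤ π)
    (h4 : π - x - (b - a) / 2 ≤ C) :
    alpha21 a b f g x = alpha21 a b f' g' x :=
  hf.integral hg (s := -x - (b - a) / 2) (fun t => by ring) h1 h2 (by linarith) (by linarith)

/-- Transfer of pointwise statements to agreement on an interval through a shift. -/
theorem agree_of_shift {f f' : ℝ → ℂ} {A B c : ℝ}
    (h : ∀ᵐ x ∂(volume : Measure ℝ), x + c ∈ Ioo A B → f (x + c) = f' (x + c)) :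
    AgreeOn f f' A B := by
  have := ae_shift h (-c)
  simpa [AgreeOn] using this

/-- Uniqueness theorem: for `π/3 ≤ a₁ < 2π/5 < a₂ < π` with `2a₁ + a₂/2 ≥ π`, if the
functions `K^m, G^m` built from `(p₁,p₂,q₁,q₂)` and from `(p̃₁,p̃₂,q̃₁,q̃₂)` coincide a.e.
on `(a₁/2, π−a₁/2)` for `m = 0, 1`, then `p_k = p̃_k` a.e. on `(a₁,π)` and `q_k = q̃_k`
a.e. on `(a₂,π)`. -/
theorem uniqueness_theorem (a₁ a₂ : ℝ)
    (ha₁ : π / 3 ≤ a₁) (ha₁' : a₁ < 2 * π / 5)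
    (ha₂ : 2 * π / 5 < a₂) (ha₂' : a₂ < π)
    (hge : π ≤ 2 * a₁ + a₂ / 2)
    (p₁ p₂ q₁ q₂ p₁' p₂' q₁' q₂' : ℝ → ℂ)
    (hp₁ : MemLp p₁ 2 (volume.restrict (Ioo 0 π)))
    (hp₂ : MemLp p₂ 2 (volume.restrict (Ioo 0 π)))
    (hq₁ : MemLp q₁ 2 (volume.restrict (Ioo 0 π)))
    (hq₂ : MemLp q₂ 2 (volume.restrict (Ioo 0 π)))
    (hp₁' : MemLp p₁' 2 (volume.restrict (Ioo 0 π)))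
    (hp₂' : MemLp p₂' 2 (volume.restrict (Ioo 0 π)))
    (hq₁' : MemLp q₁' 2 (volume.restrict (Ioo 0 π)))
    (hq₂' : MemLp q₂' 2 (volume.restrict (Ioo 0 π)))
    (hp₁e : ∀ x, x ∉ Ioo 0 π → p₁ x = 0) (hp₂e : ∀ x, x ∉ Ioo 0 π → p₂ x = 0)
    (hq₁e : ∀ x, x ∉ Ioo 0 π → q₁ x = 0) (hq₂e : ∀ x, x ∉ Ioo 0 π → q₂ x = 0)
    (hp₁e' : ∀ x, x ∉ Ioo 0 π → p₁' x = 0) (hp₂e' : ∀ x, x ∉ Ioo 0 π → p₂' x = 0)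
    (hq₁e' : ∀ x, x ∉ Ioo 0 π → q₁' x = 0) (hq₂e' : ∀ x, x ∉ Ioo 0 π → q₂' x = 0)
    (hp₁0 : ∀ᵐ x ∂(volume : Measure ℝ), x ∈ Ioo 0 a₁ → p₁ x = 0)
    (hp₂0 : ∀ᵐ x ∂(volume : Measure ℝ), x ∈ Ioo 0 a₁ → p₂ x = 0)
    (hp₁0' : ∀ᵐ x ∂(volume : Measure ℝ), x ∈ Ioo 0 a₁ → p₁' x = 0)
    (hp₂0' : ∀ᵐ x ∂(volume : Measure ℝ), x ∈ Ioo 0 a₁ → p₂' x = 0)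
    (hq₁0 : ∀ᵐ x ∂(volume : Measure ℝ), x ∈ Ioo 0 a₂ → q₁ x = 0)
    (hq₂0 : ∀ᵐ x ∂(volume : Measure ℝ), x ∈ Ioo 0 a₂ → q₂ x = 0)
    (hq₁0' : ∀ᵐ x ∂(volume : Measure ℝ), x ∈ Ioo 0 a₂ → q₁' x = 0)
    (hq₂0' : ∀ᵐ x ∂(volume : Measure ℝ), x ∈ Ioo 0 a₂ → q₂' x = 0)
    (hK : ∀ m : ℕ, m = 0 ∨ m = 1 →
      ∀ᵐ x ∂(volume.restrict (Ioo (a₁ / 2) (π - a₁ / 2))),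
        Kfun a₁ a₂ m p₁ p₂ q₁ q₂ x = Kfun a₁ a₂ m p₁' p₂' q₁' q₂' x)
    (hG : ∀ m : ℕ, m = 0 ∨ m = 1 →
      ∀ᵐ x ∂(volume.restrict (Ioo (a₁ / 2) (π - a₁ / 2))),
        Gfun a₁ a₂ m p₁ p₂ q₁ q₂ x = Gfun a₁ a₂ m p₁' p₂' q₁' q₂' x) :
    (∀ᵐ x ∂(volume.restrict (Ioo a₁ π)), p₁ x = p₁' x ∧ p₂ x = p₂' x) ∧
    (∀ᵐ x ∂(volume.restrict (Ioo a₂ π)), q₁ x = q₁' x ∧ q₂ x = q₂' x) := by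
  have hpi : 0 < π := Real.pi_pos
  have hK0 := (ae_restrict_iff' measurableSet_Ioo).1 (hK 0 (Or.inl rfl))
  have hK1 := (ae_restrict_iff' measurableSet_Ioo).1 (hK 1 (Or.inr rfl))
  have hG0 := (ae_restrict_iff' measurableSet_Ioo).1 (hG 0 (Or.inl rfl))
  have hG1 := (ae_restrict_iff' measurableSet_Ioo).1 (hG 1 (Or.inr rfl))
  simp only [Kfun, Gfun, pow_zero, pow_one, one_mul] at hK0 hK1 hG0 hG1
  -- the functions p near the two ends
  have p1L : AgreeOn p₁ p₁' a₁ (a₁ + a₂ / 2) := by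
    apply agree_of_shift (c := a₁ / 2)
    filter_upwards [hK0, hK1] with x e0 e1 hx
    have hm : x ∈ Ioo (a₁ / 2) (π - a₁ / 2) := ⟨by linarith [hx.1], by linarith [hx.2]⟩
    have hn : x ∉ Ioo ((a₁ + a₂) / 2) (π - (a₁ + a₂) / 2) := fun h => by linarith [h.1, hx.2]
    have e0 := e0 hm
    have e1 := e1 hm
    simp only [indicator_of_notMem hn, mul_zero, add_zero, sub_zero] at e0 e1
    linear_combination (e0 - e1) / 2
  have p1R : AgreeOn p₁ p₁' (π - a₂ / 2) π := by
    apply agree_of_shift (c := a₁ / 2)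
    filter_upwards [hK0, hK1] with x e0 e1 hx
    have hm : x ∈ Ioo (a₁ / 2) (π - a₁ / 2) := ⟨by linarith [hx.1], by linarith [hx.2]⟩
    have hn : x ∉ Ioo ((a₁ + a₂) / 2) (π - (a₁ + a₂) / 2) := fun h => by linarith [h.2, hx.1]
    have e0 := e0 hm
    have e1 := e1 hm
    simp only [indicator_of_notMem hn, mul_zero, add_zero, sub_zero] at e0 e1
    linear_combination (e0 - e1) / 2
  have p2L : AgreeOn p₂ p₂' a₁ (a₁ + a₂ / 2) := by
    apply agree_of_shift (c := a₁ / 2)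
    filter_upwards [hG0, hG1] with x e0 e1 hx
    have hm : x ∈ Ioo (a₁ / 2) (π - a₁ / 2) := ⟨by linarith [hx.1], by linarith [hx.2]⟩
    have hn : x ∉ Ioo ((a₁ + a₂) / 2) (π - (a₁ + a₂) / 2) := fun h => by linarith [h.1, hx.2]
    have e0 := e0 hm
    have e1 := e1 hm
    simp only [indicator_of_notMem hn, mul_zero, add_zero, sub_zero] at e0 e1
    linear_combination (e0 - e1) / 2
  have p2R : AgreeOn p₂ p₂' (π - a₂ / 2) π := by
    apply agree_of_shift (c := a₁ / 2)
    filter_upwards [hG0, hG1] with x e0 e1 hx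
    have hm : x ∈ Ioo (a₁ / 2) (π - a₁ / 2) := ⟨by linarith [hx.1], by linarith [hx.2]⟩
    have hn : x ∉ Ioo ((a₁ + a₂) / 2) (π - (a₁ + a₂) / 2) := fun h => by linarith [h.2, hx.1]
    have e0 := e0 hm
    have e1 := e1 hm
    simp only [indicator_of_notMem hn, mul_zero, add_zero, sub_zero] at e0 e1
    linear_combination (e0 - e1) / 2
  -- the terms quadratic in p agree
  have hα : ∀ {f f' g g' : ℝ → ℂ}, AgreeOn f f' (π - a₂ / 2) π →
      AgreeOn g g' a₁ (a₁ + a₂ / 2) → ∀ x ∈ Ioo a₁ (π - a₁),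
      alpha1 a₁ f g x = alpha1 a₁ f' g' x := fun hf hg x hx =>
    agree_alpha hf hg (by linarith [hx.1]) (by linarith [hx.2]) (by linarith [hx.1])
  have hαK : ∀ x, (alpha1 a₁ p₁ p₂ x - alpha1 a₁ p₂ p₁ x) * (Ioo a₁ (π - a₁)).indicator 1 x =
      (alpha1 a₁ p₁' p₂' x - alpha1 a₁ p₂' p₁' x) * (Ioo a₁ (π - a₁)).indicator 1 x := by
    intro x
    by_cases hx : x ∈ Ioo a₁ (π - a₁)
    · rw [hα p1R p2L x hx, hα p2R p1L x hx]
    · simp [indicator_of_notMem hx]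
  have hαG : ∀ x, (alpha1 a₁ p₁ p₁ x + alpha1 a₁ p₂ p₂ x) * (Ioo a₁ (π - a₁)).indicator 1 x =
      (alpha1 a₁ p₁' p₁' x + alpha1 a₁ p₂' p₂' x) * (Ioo a₁ (π - a₁)).indicator 1 x := by
    intro x
    by_cases hx : x ∈ Ioo a₁ (π - a₁)
    · rw [hα p1R p1L x hx, hα p2R p2L x hx]
    · simp [indicator_of_notMem hx]
  simp only [hαK] at hK0 hK1
  simp only [hαG] at hG0 hG1
  -- the functions q near the two ends
  have q1L : AgreeOn q₁ q₁' a₂ (min (3 * a₂ / 2) π) := by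
    apply agree_of_shift (c := a₂ / 2)
    filter_upwards [hK0, hK1] with x e0 e1 hx'
    have hx : x + a₂ / 2 ∈ Ioo a₂ (3 * a₂ / 2) := ⟨hx'.1, hx'.2.trans_le (min_le_left _ _)⟩
    have hxpi : x + a₂ / 2 < π := hx'.2.trans_le (min_le_right _ _)
    have hm : x ∈ Ioo (a₁ / 2) (π - a₁ / 2) := ⟨by linarith [hx.1, le_max_left a₂ (π - a₂ / 2)], by linarith [hx.2]⟩
    have hn : x ∉ Ioo a₂ (π - a₂) := fun h => by linarith [h.1, hx.2]
    have e0 := e0 hm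
    have e1 := e1 hm
    simp only [indicator_of_notMem hn, mul_zero, add_zero, sub_zero] at e0 e1
    linear_combination (e0 + e1) / 2
  have q1R : AgreeOn q₁ q₁' (max a₂ (π - a₂ / 2)) (min π π) := by
    apply agree_of_shift (c := a₂ / 2)
    filter_upwards [hK0, hK1] with x e0 e1 hx'
    have hx : x + a₂ / 2 ∈ Ioo (max a₂ (π - a₂ / 2)) π := ⟨hx'.1, hx'.2.trans_le (min_le_left _ _)⟩
    have hxpi : x + a₂ / 2 < π := hx'.2.trans_le (min_le_right _ _)
    have hm : x ∈ Ioo (a₁ / 2) (π - a₁ / 2) := ⟨by linarith [hx.1, le_max_left a₂ (π - a₂ / 2)], by linarith [hx.2]⟩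
    have hn : x ∉ Ioo a₂ (π - a₂) := fun h => by linarith [h.2, hx.1, le_max_right a₂ (π - a₂ / 2)]
    have e0 := e0 hm
    have e1 := e1 hm
    simp only [indicator_of_notMem hn, mul_zero, add_zero, sub_zero] at e0 e1
    linear_combination (e0 + e1) / 2
  have q2L : AgreeOn q₂ q₂' a₂ (min (3 * a₂ / 2) π) := by
    apply agree_of_shift (c := a₂ / 2)
    filter_upwards [hG0, hG1] with x e0 e1 hx'
    have hx : x + a₂ / 2 ∈ Ioo a₂ (3 * a₂ / 2) := ⟨hx'.1, hx'.2.trans_le (min_le_left _ _)⟩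
    have hxpi : x + a₂ / 2 < π := hx'.2.trans_le (min_le_right _ _)
    have hm : x ∈ Ioo (a₁ / 2) (π - a₁ / 2) := ⟨by linarith [hx.1, le_max_left a₂ (π - a₂ / 2)], by linarith [hx.2]⟩
    have hn : x ∉ Ioo a₂ (π - a₂) := fun h => by linarith [h.1, hx.2]
    have e0 := e0 hm
    have e1 := e1 hm
    simp only [indicator_of_notMem hn, mul_zero, add_zero, sub_zero] at e0 e1
    linear_combination (e0 + e1) / 2
  have q2R : AgreeOn q₂ q₂' (max a₂ (π - a₂ / 2)) (min π π) := by
    apply agree_of_shift (c := a₂ / 2)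
    filter_upwards [hG0, hG1] with x e0 e1 hx'
    have hx : x + a₂ / 2 ∈ Ioo (max a₂ (π - a₂ / 2)) π := ⟨hx'.1, hx'.2.trans_le (min_le_left _ _)⟩
    have hxpi : x + a₂ / 2 < π := hx'.2.trans_le (min_le_right _ _)
    have hm : x ∈ Ioo (a₁ / 2) (π - a₁ / 2) := ⟨by linarith [hx.1, le_max_left a₂ (π - a₂ / 2)], by linarith [hx.2]⟩
    have hn : x ∉ Ioo a₂ (π - a₂) := fun h => by linarith [h.2, hx.1, le_max_right a₂ (π - a₂ / 2)]
    have e0 := e0 hm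
    have e1 := e1 hm
    simp only [indicator_of_notMem hn, mul_zero, add_zero, sub_zero] at e0 e1
    linear_combination (e0 + e1) / 2
  rw [min_self] at q1R q2R
  have hβ : ∀ {f f' g g' : ℝ → ℂ}, AgreeOn f f' (max a₂ (π - a₂ / 2)) π →
      AgreeOn g g' a₂ (min (3 * a₂ / 2) π) → ∀ x ∈ Ioo a₂ (π - a₂),
      alpha2 a₂ f g x = alpha2 a₂ f' g' x := fun hf hg x hx =>
    agree_alpha' hf hg (max_le (by linarith [hx.1]) (by linarith [hx.1])) (by linarith [hx.2])
      (le_min (by linarith [hx.1]) (by linarith [hx.1]))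
  have hβK : ∀ x, (alpha2 a₂ q₁ q₂ x - alpha2 a₂ q₂ q₁ x) * (Ioo a₂ (π - a₂)).indicator 1 x =
      (alpha2 a₂ q₁' q₂' x - alpha2 a₂ q₂' q₁' x) * (Ioo a₂ (π - a₂)).indicator 1 x := by
    intro x
    by_cases hx : x ∈ Ioo a₂ (π - a₂)
    · rw [hβ q1R q2L x hx, hβ q2R q1L x hx]
    · simp [indicator_of_notMem hx]
  have hβG : ∀ x, (alpha2 a₂ q₁ q₁ x + alpha2 a₂ q₂ q₂ x) * (Ioo a₂ (π - a₂)).indicator 1 x =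
      (alpha2 a₂ q₁' q₁' x + alpha2 a₂ q₂' q₂' x) * (Ioo a₂ (π - a₂)).indicator 1 x := by
    intro x
    by_cases hx : x ∈ Ioo a₂ (π - a₂)
    · rw [hβ q1R q1L x hx, hβ q2R q2L x hx]
    · simp [indicator_of_notMem hx]
  simp only [hβK] at hK0 hK1
  simp only [hβG] at hG0 hG1
  -- q is determined everywhere
  have q1A : AgreeOn q₁ q₁' a₂ π := by
    apply agree_of_shift (c := a₂ / 2)
    filter_upwards [hK0, hK1] with x e0 e1 hx
    have hm : x ∈ Ioo (a₁ / 2) (π - a₁ / 2) := ⟨by linarith [hx.1], by linarith [hx.2]⟩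
    linear_combination (e0 hm + e1 hm) / 2
  have q2A : AgreeOn q₂ q₂' a₂ π := by
    apply agree_of_shift (c := a₂ / 2)
    filter_upwards [hG0, hG1] with x e0 e1 hx
    have hm : x ∈ Ioo (a₁ / 2) (π - a₁ / 2) := ⟨by linarith [hx.1], by linarith [hx.2]⟩
    linear_combination (e0 hm + e1 hm) / 2
  -- the mixed terms agree
  have h12 : ∀ {f f' g g' : ℝ → ℂ}, AgreeOn f f' (π - a₂ / 2) π →
      AgreeOn g g' a₂ π → ∀ x ∈ Ioo ((a₁ + a₂) / 2) (π - (a₁ + a₂) / 2),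
      alpha12 a₁ a₂ f g x = alpha12 a₁ a₂ f' g' x := fun hf hg x hx =>
    agree_alpha12 hf hg (by linarith [hx.1]) (by linarith [hx.2]) (by linarith [hx.1])
  have h21 : ∀ {f f' g g' : ℝ → ℂ}, AgreeOn f f' a₂ π →
      AgreeOn g g' a₁ (a₁ + a₂ / 2) → ∀ x ∈ Ioo ((a₁ + a₂) / 2) (π - (a₁ + a₂) / 2),
      alpha21 a₁ a₂ f g x = alpha21 a₁ a₂ f' g' x := fun hf hg x hx =>
    agree_alpha21 hf hg (by linarith [hx.1]) (by linarith [hx.2]) (by linarith [hx.1])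
  have p1A : AgreeOn p₁ p₁' a₁ π := by
    apply agree_of_shift (c := a₁ / 2)
    filter_upwards [hK0, hK1] with x e0 e1 hx'
    have hm : x ∈ Ioo (a₁ / 2) (π - a₁ / 2) := ⟨by linarith [hx'.1], by linarith [hx'.2]⟩
    have e0 := e0 hm
    have e1 := e1 hm
    by_cases hx : x ∈ Ioo ((a₁ + a₂) / 2) (π - (a₁ + a₂) / 2)
    · rw [h12 p2R q1A x hx, h12 p1R q2A x hx, h21 q2A p1L x hx, h21 q1A p2L x hx] at e0 e1
      linear_combination (e0 - e1) / 2
    · simp only [indicator_of_notMem hx, mul_zero, add_zero, sub_zero] at e0 e1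
      linear_combination (e0 - e1) / 2
  have p2A : AgreeOn p₂ p₂' a₁ π := by
    apply agree_of_shift (c := a₁ / 2)
    filter_upwards [hG0, hG1] with x e0 e1 hx'
    have hm : x ∈ Ioo (a₁ / 2) (π - a₁ / 2) := ⟨by linarith [hx'.1], by linarith [hx'.2]⟩
    have e0 := e0 hm
    have e1 := e1 hm
    by_cases hx : x ∈ Ioo ((a₁ + a₂) / 2) (π - (a₁ + a₂) / 2)
    · rw [h12 p1R q1A x hx, h12 p2R q2A x hx, h21 q1A p1L x hx, h21 q2A p2L x hx] at e0 e1
      linear_combination (e0 - e1) / 2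
    · simp only [indicator_of_notMem hx, mul_zero, add_zero, sub_zero] at e0 e1
      linear_combination (e0 - e1) / 2
  constructor
  · rw [ae_restrict_iff' measurableSet_Ioo]
    filter_upwards [p1A, p2A] with x h1 h2 hx using ⟨h1 hx, h2 hx⟩
  · rw [ae_restrict_iff' measurableSet_Ioo]
    filter_upwards [q1A, q2A] with x h1 h2 hx using ⟨h1 hx, h2 hx⟩
end

section
/- Let 0 < a₁ < a₂ < π with 2a₁ + a₂/2 ≥ π. Let f, f̃, g, g̃ ∈ L²(0, π; ℂ) (extended by zero to ℝ) satisfy f = f̃ a.e. on (π − a₂/2, π) and g = g̃ a.e. on (a₁, a₁ + a₂/2). Then for every x > a₁, ∫_{x+a₁}^{π} f(t)·g(t − x) dt = ∫_{x+a₁}^{π} f̃(t)·g̃(t − x) dt. (That is, the integral α¹[f,g](x) for x > a₁ is determined by the values of f on (π−a₂/2, π) and of g on (a₁, a₁+a₂/2).) -/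
open MeasureTheory Real Set Filter

/-- For `0 < a₁ < a₂ < π` with `2a₁ + a₂/2 ≥ π`: if `f = f̃` a.e. on `(π−a₂/2, π)` and
`g = g̃` a.e. on `(a₁, a₁+a₂/2)`, then for every `x > a₁`,
`∫_{x+a₁}^{π} f(t)·g(t−x) dt = ∫_{x+a₁}^{π} f̃(t)·g̃(t−x) dt`. -/
theorem alpha1_determined (a₁ a₂ : ℝ)
    (ha₁ : 0 < a₁) (ha : a₁ < a₂) (ha₂ : a₂ < π)
    (hge : π ≤ 2 * a₁ + a₂ / 2)
    (f f' g g' : ℝ → ℂ)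
    (hf : MemLp f 2 (volume.restrict (Ioo 0 π)))
    (hf' : MemLp f' 2 (volume.restrict (Ioo 0 π)))
    (hg : MemLp g 2 (volume.restrict (Ioo 0 π)))
    (hg' : MemLp g' 2 (volume.restrict (Ioo 0 π)))
    (hfe : ∀ x, x ∉ Ioo 0 π → f x = 0) (hfe' : ∀ x, x ∉ Ioo 0 π → f' x = 0)
    (hge' : ∀ x, x ∉ Ioo 0 π → g x = 0) (hge'' : ∀ x, x ∉ Ioo 0 π → g' x = 0)
    (hff : ∀ᵐ t ∂(volume : Measure ℝ), t ∈ Ioo (π - a₂ / 2) π → f t = f' t)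
    (hgg : ∀ᵐ t ∂(volume : Measure ℝ), t ∈ Ioo a₁ (a₁ + a₂ / 2) → g t = g' t) :
    ∀ x : ℝ, a₁ < x →
      (∫ t in (x + a₁)..π, f t * g (t - x)) = ∫ t in (x + a₁)..π, f' t * g' (t - x) := by
  intro x hx
  apply intervalIntegral.integral_congr_ae
  have hgg2 : ∀ᵐ t ∂(volume : Measure ℝ),
      t - x ∈ Ioo a₁ (a₁ + a₂ / 2) → g (t - x) = g' (t - x) :=
    (measurePreserving_sub_right volume x).quasiMeasurePreserving.ae hgg
  filter_upwards [hff, hgg2] with t h1 h2 ht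
  by_cases htp : t < π
  · have hlt : x + a₁ < t := by
      rcases Set.mem_uIoc.1 ht with h | h
      · exact h.1
      · linarith [h.1]
    rw [h1 ⟨by linarith, htp⟩, h2 ⟨by linarith, by linarith⟩]
  · rw [hfe t (fun h => htp h.2), hfe' t (fun h => htp h.2)]
    simp
end
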